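/- Matrix Gronwall lemma: Let L_t(X) = L(X) + c(t)X, where L(X) = AX + XAᵀ + Σ_{i,j=1}^d k_{ij}N_iXN_jᵀ with K = (k_{ij}) positive semidefinite, and c : [0,T] → [0,∞) is left-continuous and integrable. Suppose X, X̄ : [0,T] → Sym(n,ℝ) are continuous, X(0) = X̄(0), X̄ satisfies X̄(t) = X̄(0) + ∫₀ᵗ L_v(X̄(v)) dv, and X satisfies X(t) − X(s) ≤ ∫ₛᵗ L_v(X(v)) dv for all 0 ≤ s ≤ t ≤ T (Loewner order). Then X(t) ≤ X̄(t) for all t ∈ [0,T]. -/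

import Mathlib

open Matrix

/-- Lyapunov operator `L(X) = A X + X Aᵀ + ∑ᵢⱼ kᵢⱼ Nᵢ X Nⱼᵀ`. -/
def lyap {n d : ℕ} (A : Matrix (Fin n) (Fin n) ℝ)
    (N : Fin d → Matrix (Fin n) (Fin n) ℝ) (K : Matrix (Fin d) (Fin d) ℝ)
    (X : Matrix (Fin n) (Fin n) ℝ) : Matrix (Fin n) (Fin n) ℝ :=
  A * X + X * Aᵀ + ∑ i : Fin d, ∑ j : Fin d, K i j • (N i * X * (N j)ᵀ)

/-- Quadratic form. -/
def qf {n : ℕ} (Z : Matrix (Fin n) (Fin n) ℝ) (x : Fin n → ℝ) : ℝ := x ⬝ᵥ (Z *ᵥ x)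

lemma qf_add {n : ℕ} (Z W : Matrix (Fin n) (Fin n) ℝ) (x : Fin n → ℝ) :
    qf (Z + W) x = qf Z x + qf W x := by
  simp [qf, Matrix.add_mulVec, dotProduct_add]

lemma qf_sub {n : ℕ} (Z W : Matrix (Fin n) (Fin n) ℝ) (x : Fin n → ℝ) :
    qf (Z - W) x = qf Z x - qf W x := by
  simp [qf, Matrix.sub_mulVec, dotProduct_sub]

lemma qf_smul {n : ℕ} (r : ℝ) (Z : Matrix (Fin n) (Fin n) ℝ) (x : Fin n → ℝ) :
    qf (r • Z) x = r * qf Z x := by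
  simp [qf, Matrix.smul_mulVec, dotProduct_smul]

lemma qf_one {n : ℕ} (x : Fin n → ℝ) :
    qf (1 : Matrix (Fin n) (Fin n) ℝ) x = x ⬝ᵥ x := by
  simp [qf]

lemma qf_vsmul {n : ℕ} (r : ℝ) (Z : Matrix (Fin n) (Fin n) ℝ) (x : Fin n → ℝ) :
    qf Z (r • x) = r * (r * qf Z x) := by
  simp [qf, Matrix.mulVec_smul, dotProduct_smul, smul_dotProduct]

lemma qf_continuous {n : ℕ} :
    Continuous (fun p : Matrix (Fin n) (Fin n) ℝ × (Fin n → ℝ) => qf p.1 p.2) := by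
  unfold qf
  fun_prop

lemma qf_eq_sum {n : ℕ} (Z : Matrix (Fin n) (Fin n) ℝ) (x : Fin n → ℝ) :
    qf Z x = ∑ i, ∑ j, x i * (Z i j * x j) := by
  simp [qf, dotProduct, Matrix.mulVec, Finset.mul_sum]

lemma lyap_add {n d : ℕ} (A : Matrix (Fin n) (Fin n) ℝ)
    (N : Fin d → Matrix (Fin n) (Fin n) ℝ) (K : Matrix (Fin d) (Fin d) ℝ)
    (X Y : Matrix (Fin n) (Fin n) ℝ) :
    lyap A N K (X + Y) = lyap A N K X + lyap A N K Y := by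
  simp only [lyap, mul_add, add_mul, smul_add, Finset.sum_add_distrib]
  abel

lemma lyap_smul {n d : ℕ} (A : Matrix (Fin n) (Fin n) ℝ)
    (N : Fin d → Matrix (Fin n) (Fin n) ℝ) (K : Matrix (Fin d) (Fin d) ℝ)
    (r : ℝ) (X : Matrix (Fin n) (Fin n) ℝ) :
    lyap A N K (r • X) = r • lyap A N K X := by
  simp only [lyap, Matrix.mul_smul, Matrix.smul_mul, smul_add, Finset.smul_sum]
  congr 1
  refine Finset.sum_congr rfl fun i _ => Finset.sum_congr rfl fun j _ => ?_
  rw [smul_comm]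

lemma lyap_sub {n d : ℕ} (A : Matrix (Fin n) (Fin n) ℝ)
    (N : Fin d → Matrix (Fin n) (Fin n) ℝ) (K : Matrix (Fin d) (Fin d) ℝ)
    (X Y : Matrix (Fin n) (Fin n) ℝ) :
    lyap A N K (X - Y) = lyap A N K X - lyap A N K Y := by
  have h : X - Y = X + (-1 : ℝ) • Y := by simp [sub_eq_add_neg]
  rw [h, lyap_add, lyap_smul]
  simp [sub_eq_add_neg]

lemma lyap_continuous {n d : ℕ} (A : Matrix (Fin n) (Fin n) ℝ)
    (N : Fin d → Matrix (Fin n) (Fin n) ℝ) (K : Matrix (Fin d) (Fin d) ℝ) :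
    Continuous (lyap A N K) := by
  unfold lyap
  fun_prop

open scoped MatrixOrder in
lemma exists_factor {n : ℕ} (P : Matrix (Fin n) (Fin n) ℝ) (hP : P.PosSemidef) :
    ∃ B : Matrix (Fin n) (Fin n) ℝ, P = Bᵀ * B := by
  obtain ⟨B, hB⟩ := CStarAlgebra.nonneg_iff_eq_star_mul_self.mp hP.nonneg
  exact ⟨B, by simpa [Matrix.star_eq_conjTranspose] using hB⟩

lemma qf_lyap_nonneg {n d : ℕ} (A : Matrix (Fin n) (Fin n) ℝ)
    (N : Fin d → Matrix (Fin n) (Fin n) ℝ) (K : Matrix (Fin d) (Fin d) ℝ)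
    (hK : K.PosSemidef) (P : Matrix (Fin n) (Fin n) ℝ) (hP : P.PosSemidef)
    (x : Fin n → ℝ) (hx : qf P x = 0) : 0 ≤ qf (lyap A N K P) x := by
  have hPx : P *ᵥ x = 0 := by
    have := (hP.dotProduct_mulVec_zero_iff x).1 (by simpa [qf] using hx)
    exact this
  have hPs : Pᵀ = P := by simpa using hP.isHermitian.eq
  have hxP : x ᵥ* P = 0 := by
    rw [← hPs, Matrix.vecMul_transpose]; exact hPx
  obtain ⟨B, hB'⟩ := exists_factor P hP
  have h1 : qf (A * P) x = 0 := by
    simp [qf, ← Matrix.mulVec_mulVec, hPx]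
  have h2 : qf (P * Aᵀ) x = 0 := by
    simp [qf, ← Matrix.mulVec_mulVec, Matrix.dotProduct_mulVec, hxP]
  have h3 : ∀ i j, qf (N i * P * (N j)ᵀ) x
      = ∑ l, (B *ᵥ ((N i)ᵀ *ᵥ x)) l * (B *ᵥ ((N j)ᵀ *ᵥ x)) l := by
    intro i j
    change _ = (B *ᵥ ((N i)ᵀ *ᵥ x)) ⬝ᵥ (B *ᵥ ((N j)ᵀ *ᵥ x))
    rw [hB', qf]
    simp only [← Matrix.mulVec_mulVec, Matrix.mul_assoc]
    rw [Matrix.dotProduct_mulVec, Matrix.dotProduct_mulVec, Matrix.vecMul_transpose,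
      Matrix.mulVec_transpose (N i)]
  have hsum : ∀ (s : Finset (Fin d)) (f : Fin d → Matrix (Fin n) (Fin n) ℝ),
      qf (∑ i ∈ s, f i) x = ∑ i ∈ s, qf (f i) x := by
    intro s f
    simp [qf, Matrix.sum_mulVec, dotProduct_sum]
  rw [lyap, qf_add, qf_add, h1, h2, hsum]
  simp only [hsum, qf_smul, h3, zero_add]
  have : ∑ i, ∑ j, K i j * ∑ l, (B *ᵥ ((N i)ᵀ *ᵥ x)) l * (B *ᵥ ((N j)ᵀ *ᵥ x)) l
      = ∑ l, qf K (fun i => (B *ᵥ ((N i)ᵀ *ᵥ x)) l) := by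
    simp only [qf_eq_sum, Finset.mul_sum]
    symm
    rw [Finset.sum_comm]
    refine Finset.sum_congr rfl fun i _ => ?_
    rw [Finset.sum_comm]
    refine Finset.sum_congr rfl fun j _ => Finset.sum_congr rfl fun l _ => ?_
    ring
  rw [this]
  refine Finset.sum_nonneg fun l _ => ?_
  simpa [qf] using hK.dotProduct_mulVec_nonneg (fun i => (B *ᵥ ((N i)ᵀ *ᵥ x)) l)

lemma posSemidef_of_qf {n : ℕ} (P : Matrix (Fin n) (Fin n) ℝ) (hs : P.IsSymm)
    (h : ∀ x, 0 ≤ qf P x) : P.PosSemidef := by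
  refine Matrix.PosSemidef.of_dotProduct_mulVec_nonneg ?_ ?_
  · simpa [Matrix.IsHermitian] using hs.eq
  · intro x
    simpa [qf] using h x

lemma qf_nonneg_of_sphere {n : ℕ} (P : Matrix (Fin n) (Fin n) ℝ)
    (h : ∀ x ∈ Metric.sphere (0 : Fin n → ℝ) 1, 0 ≤ qf P x) (x : Fin n → ℝ) : 0 ≤ qf P x := by
  by_cases hx : x = 0
  · simp [hx, qf]
  have hn : 0 < ‖x‖ := norm_pos_iff.2 hx
  have := h (‖x‖⁻¹ • x) (by simp [norm_smul, hn.ne'])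
  rw [qf_vsmul] at this
  have h2 : qf P x = ‖x‖ * (‖x‖ * (‖x‖⁻¹ * (‖x‖⁻¹ * qf P x))) := by field_simp
  rw [h2]; positivity

lemma core (n d : ℕ) (T : ℝ)
    (A : Matrix (Fin n) (Fin n) ℝ) (N : Fin d → Matrix (Fin n) (Fin n) ℝ)
    (K : Matrix (Fin d) (Fin d) ℝ) (hK : K.PosSemidef)
    (c : ℝ → ℝ) (hcnonneg : ∀ t ∈ Set.Icc (0:ℝ) T, 0 ≤ c t)
    (hcint : IntervalIntegrable c MeasureTheory.volume 0 T)
    (Y : ℝ → Matrix (Fin n) (Fin n) ℝ)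
    (hsym : ∀ t ∈ Set.Icc (0:ℝ) T, (Y t).IsSymm)
    (hcont : ContinuousOn Y (Set.Icc 0 T))
    (h0 : Y 0 = 0)
    (H : ∀ s ∈ Set.Icc (0:ℝ) T, ∀ t ∈ Set.Icc (0:ℝ) T, s ≤ t → ∀ x,
      ∫ v in s..t, (qf (lyap A N K (Y v)) x + c v * qf (Y v) x) ≤ qf (Y t) x - qf (Y s) x) :
    ∀ t ∈ Set.Icc (0:ℝ) T, ∀ x, 0 ≤ qf (Y t) x := by
  intro t0 ht0 x
  refine qf_nonneg_of_sphere _ ?_ x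
  clear x
  intro x0 hx0
  by_contra hneg
  push Not at hneg
  have hT : 0 ≤ T := ht0.1.trans ht0.2
  have hspos : ∀ x ∈ Metric.sphere (0 : Fin n → ℝ) 1, 0 < x ⬝ᵥ x := by
    intro x hx
    have hx' : x ≠ 0 := by rintro rfl; simp at hx
    have h1 : 0 ≤ x ⬝ᵥ x := Finset.sum_nonneg fun i _ => mul_self_nonneg _
    exact lt_of_le_of_ne h1 (fun h => hx' (dotProduct_self_eq_zero.1 h.symm))
  have hqc : ∀ Z : Matrix (Fin n) (Fin n) ℝ, Continuous (fun x => qf Z x) := fun Z =>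
    qf_continuous.comp (continuous_const.prodMk continuous_id)
  -- the bound M
  obtain ⟨M, hM1, hM⟩ : ∃ M : ℝ, 1 ≤ M ∧ ∀ x ∈ Metric.sphere (0 : Fin n → ℝ) 1,
      qf (lyap A N K 1) x ≤ (M - 1) * (x ⬝ᵥ x) := by
    have hc : ContinuousOn (fun x => qf (lyap A N K 1) x / (x ⬝ᵥ x))
        (Metric.sphere (0 : Fin n → ℝ) 1) := by
      refine ContinuousOn.div (hqc _).continuousOn (by fun_prop) fun x hx => (hspos x hx).ne'
    obtain ⟨M0, hM0⟩ := (isCompact_sphere (0 : Fin n → ℝ) 1).bddAbove_image hc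
    refine ⟨max M0 0 + 1, by simp, fun x hx => ?_⟩
    have h1 := hM0 (Set.mem_image_of_mem _ hx)
    rw [div_le_iff₀ (hspos x hx)] at h1
    have := mul_le_mul_of_nonneg_right (le_max_left M0 0) (hspos x hx).le
    linarith
  have hcI : ∀ s ∈ Set.Icc (0:ℝ) T, ∀ t ∈ Set.Icc (0:ℝ) T,
      IntervalIntegrable c MeasureTheory.volume s t := by
    intro s hs t ht
    refine hcint.mono_set ?_
    rw [Set.uIcc_of_le hT]
    exact Set.OrdConnected.uIcc_subset Set.ordConnected_Icc hs ht
  have h0T : (0:ℝ) ∈ Set.Icc (0:ℝ) T := ⟨le_rfl, hT⟩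
  set g : ℝ → ℝ := fun t => M * t + ∫ v in (0:ℝ)..t, c v with hg
  have hgc : ContinuousOn g (Set.Icc 0 T) := by
    have h1 := intervalIntegral.continuousOn_primitive_interval' hcint Set.left_mem_uIcc
    rw [Set.uIcc_of_le hT] at h1
    exact ContinuousOn.add (by fun_prop) h1
  have hgd : ∀ s ∈ Set.Icc (0:ℝ) T, ∀ t ∈ Set.Icc (0:ℝ) T,
      g t - g s = ∫ v in s..t, (M + c v) := by
    intro s hs t ht
    rw [intervalIntegral.integral_add (by simp) (hcI s hs t ht)]
    have := intervalIntegral.integral_add_adjacent_intervals (hcI 0 h0T s hs) (hcI s hs t ht)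
    simp only [hg, intervalIntegral.integral_const, smul_eq_mul]
    linarith
  have hgm : ∀ s ∈ Set.Icc (0:ℝ) T, ∀ t ∈ Set.Icc (0:ℝ) T, s ≤ t → g s ≤ g t := by
    intro s hs t ht hst
    have h1 := hgd s hs t ht
    have h2 : 0 ≤ ∫ v in s..t, (M + c v) := by
      refine intervalIntegral.integral_nonneg hst fun v hv => ?_
      have := hcnonneg v ⟨hs.1.trans hv.1, hv.2.trans ht.2⟩
      linarith
    linarith
  have hg0 : g 0 = 0 := by simp [hg]
  set φ : ℝ → ℝ := fun t => Real.exp (2 * g t) with hφ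
  have hφc : ContinuousOn φ (Set.Icc 0 T) :=
    Real.continuous_exp.comp_continuousOn (continuousOn_const.mul hgc)
  have hφm : ∀ s ∈ Set.Icc (0:ℝ) T, ∀ t ∈ Set.Icc (0:ℝ) T, s ≤ t → φ s ≤ φ t := by
    intro s hs t ht hst
    exact Real.exp_le_exp.2 (by linarith [hgm s hs t ht hst])
  have hφ0 : φ 0 = 1 := by simp [hφ, hg0]
  have hφd : ∀ s ∈ Set.Icc (0:ℝ) T, ∀ t ∈ Set.Icc (0:ℝ) T,
      2 * φ s * (g t - g s) ≤ φ t - φ s := by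
    intro s hs t ht
    have h1 : φ t = φ s * Real.exp (2 * (g t - g s)) := by
      simp only [hφ, ← Real.exp_add]; congr 1; ring
    have h2 := Real.add_one_le_exp (2 * (g t - g s))
    have h3 : 0 < φ s := Real.exp_pos _
    rw [h1]
    nlinarith [mul_le_mul_of_nonneg_left h2 h3.le]
  -- epsilon
  have hφpos : ∀ t, 0 < φ t := fun t => Real.exp_pos _
  obtain ⟨ε, hε, hεe⟩ : ∃ ε : ℝ, 0 < ε ∧ qf (Y t0) x0 + ε * φ t0 * (x0 ⬝ᵥ x0) = 0 := by
    have h1 := hφpos t0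
    have h2 := hspos x0 hx0
    refine ⟨-qf (Y t0) x0 / (φ t0 * (x0 ⬝ᵥ x0)), div_pos (by linarith) (by positivity), ?_⟩
    field_simp
    ring
  set P : ℝ → Matrix (Fin n) (Fin n) ℝ := fun t => Y t + (ε * φ t) • 1 with hP
  have hPq : ∀ t x, qf (P t) x = qf (Y t) x + ε * φ t * (x ⬝ᵥ x) := by
    intro t x
    simp only [hP, qf_add, qf_smul, qf_one]
  have hPc : ContinuousOn P (Set.Icc 0 T) :=
    hcont.add ((continuousOn_const.mul hφc).smul continuousOn_const)
  -- first time
  have hjc : ContinuousOn (fun p : ℝ × (Fin n → ℝ) => qf (P p.1) p.2)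
      (Set.Icc 0 T ×ˢ Metric.sphere 0 1) := by
    refine qf_continuous.comp_continuousOn (ContinuousOn.prodMk ?_ continuousOn_snd)
    exact hPc.comp continuousOn_fst fun p hp => hp.1
  have hcomp : IsCompact ((Set.Icc (0:ℝ) T ×ˢ Metric.sphere (0 : Fin n → ℝ) 1) ∩
      (fun p : ℝ × (Fin n → ℝ) => qf (P p.1) p.2) ⁻¹' Set.Iic 0) := by
    have hk := isCompact_Icc (a := (0:ℝ)) (b := T) |>.prod (isCompact_sphere (0 : Fin n → ℝ) 1)
    exact hk.of_isClosed_subset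
      (hjc.preimage_isClosed_of_isClosed hk.isClosed isClosed_Iic) Set.inter_subset_left
  obtain ⟨t1, ⟨⟨⟨t1', x⟩, ⟨⟨ht1, hx⟩, hle⟩, rfl⟩, hmin⟩⟩ :=
    (hcomp.image continuous_fst).exists_isLeast
      ⟨t0, (t0, x0), ⟨⟨ht0, hx0⟩, by simp [hPq, hεe]⟩, rfl⟩
  simp only [Set.mem_preimage, Set.mem_Iic] at hle ht1 hx hmin
  rename' t1' => t1
  have hbefore : ∀ s ∈ Set.Icc (0:ℝ) T, s < t1 → ∀ y ∈ Metric.sphere (0 : Fin n → ℝ) 1,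
      0 < qf (P s) y := by
    intro s hs hst y hy
    by_contra hc
    push Not at hc
    have := hmin ⟨(s, y), ⟨⟨hs, hy⟩, hc⟩, rfl⟩
    exact absurd hst (not_lt.2 this)
  have hxx := hspos x hx
  have ht1pos : 0 < t1 := by
    refine lt_of_le_of_ne ht1.1 fun h => ?_
    rw [← h, hPq, h0, hφ0] at hle
    have : qf (0 : Matrix (Fin n) (Fin n) ℝ) x = 0 := by simp [qf]
    rw [this] at hle
    have := mul_pos hε hxx
    linarith
  have hPct : ContinuousWithinAt P (Set.Icc 0 t1) t1 :=
    (hPc t1 ht1).mono (Set.Icc_subset_Icc_right ht1.2)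
  have hIcoNe : (nhdsWithin t1 (Set.Ico 0 t1)).NeBot := by
    rw [← mem_closure_iff_nhdsWithin_neBot, closure_Ico ht1pos.ne]
    exact ⟨ht1.1, le_rfl⟩
  have hqcl : ∀ y, Continuous (fun Z : Matrix (Fin n) (Fin n) ℝ => qf Z y) := fun y =>
    qf_continuous.comp (continuous_id.prodMk continuous_const)
  have hPnn : ∀ y, 0 ≤ qf (P t1) y := by
    refine qf_nonneg_of_sphere _ fun y hy => ?_
    have hl : Filter.Tendsto (fun s => qf (P s) y) (nhdsWithin t1 (Set.Ico 0 t1))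
        (nhds (qf (P t1) y)) :=
      ((hqcl y).tendsto _).comp (hPct.mono Set.Ico_subset_Icc_self)
    refine ge_of_tendsto hl ?_
    filter_upwards [self_mem_nhdsWithin] with s hs
    exact (hbefore s ⟨hs.1, hs.2.le.trans ht1.2⟩ hs.2 y hy).le
  have hPx : qf (P t1) x = 0 := le_antisymm hle (hPnn x)
  have hPsym : (P t1).IsSymm := by
    simp only [hP]
    exact (hsym t1 ht1).add (Matrix.isSymm_one.smul _)
  have hLnn := qf_lyap_nonneg A N K hK (P t1) (posSemidef_of_qf _ hPsym hPnn) x hPx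
  -- localisation
  have hev : ∀ᶠ s in nhdsWithin t1 (Set.Icc 0 t1),
      -(ε * (x ⬝ᵥ x) / 2) < qf (lyap A N K (P s)) x ∧ φ t1 < 2 * φ s := by
    have hl : Filter.Tendsto (fun s => qf (lyap A N K (P s)) x) (nhdsWithin t1 (Set.Icc 0 t1))
        (nhds (qf (lyap A N K (P t1)) x)) :=
      (((hqcl x).comp (lyap_continuous A N K)).tendsto _).comp hPct
    have hl2 : Filter.Tendsto (fun s => 2 * φ s) (nhdsWithin t1 (Set.Icc 0 t1))
        (nhds (2 * φ t1)) :=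
      (((hφc t1 ht1).mono (Set.Icc_subset_Icc_right ht1.2)).tendsto).const_mul 2
    have := mul_pos hε hxx
    exact (hl.eventually_const_lt (by linarith)).and
      (hl2.eventually_const_lt (by linarith [hφpos t1]))
  obtain ⟨s, hs0, hst, hsP⟩ : ∃ s, 0 ≤ s ∧ s < t1 ∧ ∀ v ∈ Set.Icc s t1,
      -(ε * (x ⬝ᵥ x) / 2) < qf (lyap A N K (P v)) x ∧ φ t1 < 2 * φ v := by
    rw [eventually_nhdsWithin_iff, Metric.eventually_nhds_iff] at hev
    obtain ⟨δ, hδ, hd⟩ := hev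
    refine ⟨max 0 (t1 - δ / 2), le_max_left _ _, max_lt ht1pos (by linarith), fun v hv => ?_⟩
    have h1 := (le_max_left _ _).trans hv.1
    have h2 := (le_max_right _ _).trans hv.1
    refine hd ?_ ⟨h1, hv.2⟩
    rw [Real.dist_eq, abs_lt]
    constructor <;> linarith [hv.2]
  have hsI : s ∈ Set.Icc (0:ℝ) T := ⟨hs0, hst.le.trans ht1.2⟩
  have hsub : Set.uIcc s t1 ⊆ Set.Icc 0 T := by
    rw [Set.uIcc_of_le hst.le]; exact Set.Icc_subset_Icc hs0 ht1.2
  have hH := H s hsI t1 ht1 hst.le x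
  have hYc : ContinuousOn Y (Set.uIcc s t1) := hcont.mono hsub
  have hcs := hcI s hsI t1 ht1
  have hint : IntervalIntegrable (fun v => qf (lyap A N K (Y v)) x + c v * qf (Y v) x)
      MeasureTheory.volume s t1 := by
    refine IntervalIntegrable.add ?_ ?_
    · exact (((hqcl x).comp (lyap_continuous A N K)).comp_continuousOn hYc).intervalIntegrable
    · exact hcs.mul_continuousOn ((hqcl x).comp_continuousOn hYc)
  have hlow : ∫ v in s..t1, (-(ε * (x ⬝ᵥ x)) * (φ t1 * (M + c v) - 1 / 2)) ≤
      ∫ v in s..t1, (qf (lyap A N K (Y v)) x + c v * qf (Y v) x) := by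
    refine intervalIntegral.integral_mono_on hst.le ?_ hint ?_
    · refine IntervalIntegrable.const_mul ?_ _
      exact ((((intervalIntegrable_const).add hcs).const_mul _).sub intervalIntegrable_const)
    · intro v hv
      have hvI : v ∈ Set.Icc (0:ℝ) T := ⟨hs0.trans hv.1, hv.2.trans ht1.2⟩
      have hcv := hcnonneg v hvI
      have hPv : 0 ≤ qf (P v) x := by
        rcases hv.2.lt_or_eq with h | h
        · exact (hbefore v hvI h x hx).le
        · rw [h]; exact hPnn x
      have e1 : qf (Y v) x = qf (P v) x - ε * φ v * (x ⬝ᵥ x) := by rw [hPq]; ring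
      have e2 : qf (lyap A N K (Y v)) x =
          qf (lyap A N K (P v)) x - ε * φ v * qf (lyap A N K 1) x := by
        simp only [hP, lyap_add, lyap_smul, qf_add, qf_smul]; ring
      rw [e1, e2]
      have b1 := (hsP v hv).1
      have b2 : ε * φ v * qf (lyap A N K 1) x ≤ ε * φ v * ((M - 1) * (x ⬝ᵥ x)) :=
        mul_le_mul_of_nonneg_left (hM x hx) (mul_pos hε (hφpos v)).le
      have b3 : 0 ≤ c v * qf (P v) x := mul_nonneg hcv hPv
      have b4 : φ v ≤ φ t1 := hφm v hvI t1 ht1 hv.2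
      have b5 : 1 ≤ φ v := by rw [← hφ0]; exact hφm 0 h0T v hvI hvI.1
      have b6 : 0 < ε * (x ⬝ᵥ x) := mul_pos hε hxx
      have b7 : 0 ≤ ε * (x ⬝ᵥ x) * (φ v - 1) := mul_nonneg b6.le (by linarith)
      have b8 : 0 ≤ ε * (x ⬝ᵥ x) * ((φ t1 - φ v) * (M + c v)) :=
        mul_nonneg b6.le (mul_nonneg (by linarith) (by linarith))
      linarith
  have hval : ∫ v in s..t1, (-(ε * (x ⬝ᵥ x)) * (φ t1 * (M + c v) - 1 / 2)) =
      -(ε * (x ⬝ᵥ x)) * (φ t1 * (g t1 - g s) - (t1 - s) / 2) := by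
    rw [intervalIntegral.integral_const_mul, intervalIntegral.integral_sub
      (((intervalIntegrable_const).add hcs).const_mul _) intervalIntegrable_const,
      intervalIntegral.integral_const_mul, hgd s hsI t1 ht1]
    simp only [intervalIntegral.integral_const, smul_eq_mul]
    ring
  rw [hval] at hlow
  have e1 : qf (Y t1) x = qf (P t1) x - ε * φ t1 * (x ⬝ᵥ x) := by rw [hPq]; ring
  have e2 : qf (Y s) x = qf (P s) x - ε * φ s * (x ⬝ᵥ x) := by rw [hPq]; ring
  have hPs := hbefore s hsI hst x hx
  have f1 := hφd s hsI t1 ht1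
  have f2 := (hsP s ⟨le_rfl, hst.le⟩).2
  have f3 := hgm s hsI t1 ht1 hst.le
  have f4 : φ t1 * (g t1 - g s) ≤ 2 * φ s * (g t1 - g s) :=
    mul_le_mul_of_nonneg_right f2.le (by linarith)
  have b6 : 0 < ε * (x ⬝ᵥ x) := mul_pos hε hxx
  have f5 := mul_le_mul_of_nonneg_left (f4.trans f1) b6.le
  have f6 := mul_pos b6 (sub_pos.2 hst)
  linarith

lemma intInt_sum {n : ℕ} (f : Fin n → ℝ → ℝ) (s t : ℝ)
    (hf : ∀ i, IntervalIntegrable (f i) MeasureTheory.volume s t) :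
    IntervalIntegrable (fun v => ∑ i, f i v) MeasureTheory.volume s t := by
  have h := IntervalIntegrable.sum Finset.univ (f := f) (fun i _ => hf i)
  have e : (fun v => ∑ i, f i v) = ∑ i, f i := by
    funext v
    simp
  rw [e]
  exact h

lemma qf_of_integral {n : ℕ} (F : ℝ → Matrix (Fin n) (Fin n) ℝ) (s t : ℝ)
    (hF : ∀ i j, IntervalIntegrable (fun v => F v i j) MeasureTheory.volume s t)
    (x : Fin n → ℝ) :
    qf (Matrix.of (fun i j => ∫ v in s..t, F v i j)) x = ∫ v in s..t, qf (F v) x := by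
  simp only [qf_eq_sum, Matrix.of_apply]
  rw [intervalIntegral.integral_finsetSum]
  · refine Finset.sum_congr rfl fun i _ => ?_
    rw [intervalIntegral.integral_finsetSum]
    · refine Finset.sum_congr rfl fun j _ => ?_
      rw [intervalIntegral.integral_const_mul, intervalIntegral.integral_mul_const]
    · intro j _
      exact ((hF i j).mul_const _).const_mul _
  · intro i _
    refine intInt_sum _ _ _ fun j => ?_
    exact ((hF i j).mul_const _).const_mul _

theorem stmt_18 (n d : ℕ) (T : ℝ) (hT : 0 ≤ T)
    (A : Matrix (Fin n) (Fin n) ℝ) (N : Fin d → Matrix (Fin n) (Fin n) ℝ)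
    (K : Matrix (Fin d) (Fin d) ℝ) (hK : K.PosSemidef)
    (c : ℝ → ℝ) (hcnonneg : ∀ t ∈ Set.Icc (0:ℝ) T, 0 ≤ c t)
    (hcleft : ∀ t ∈ Set.Ioc (0:ℝ) T, ContinuousWithinAt c (Set.Iic t) t)
    (hcint : IntervalIntegrable c MeasureTheory.volume 0 T)
    (X Xbar : ℝ → Matrix (Fin n) (Fin n) ℝ)
    (hXsymm : ∀ t ∈ Set.Icc (0:ℝ) T, (X t).IsSymm)
    (hXbarsymm : ∀ t ∈ Set.Icc (0:ℝ) T, (Xbar t).IsSymm)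
    (hXcont : ∀ i j, ContinuousOn (fun t => X t i j) (Set.Icc 0 T))
    (hXbarcont : ∀ i j, ContinuousOn (fun t => Xbar t i j) (Set.Icc 0 T))
    (hinit : X 0 = Xbar 0)
    -- X̄ solves the matrix integral equation
    (hXbar : ∀ t ∈ Set.Icc (0:ℝ) T,
      Xbar t = Xbar 0 + Matrix.of (fun i j =>
        ∫ v in (0:ℝ)..t, (lyap A N K (Xbar v) + c v • Xbar v) i j))
    -- X satisfies the matrix integral inequality (Loewner order)
    (hX : ∀ s ∈ Set.Icc (0:ℝ) T, ∀ t ∈ Set.Icc (0:ℝ) T, s ≤ t →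
      (Matrix.of (fun i j => ∫ v in s..t, (lyap A N K (X v) + c v • X v) i j)
        - (X t - X s)).PosSemidef) :
    ∀ t ∈ Set.Icc (0:ℝ) T, (Xbar t - X t).PosSemidef := by
  have hXc : ContinuousOn X (Set.Icc 0 T) :=
    continuousOn_pi.2 fun i => continuousOn_pi.2 fun j => hXcont i j
  have hXbc : ContinuousOn Xbar (Set.Icc 0 T) :=
    continuousOn_pi.2 fun i => continuousOn_pi.2 fun j => hXbarcont i j
  have hintg : ∀ Z : ℝ → Matrix (Fin n) (Fin n) ℝ, ContinuousOn Z (Set.Icc 0 T) →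
      ∀ s ∈ Set.Icc (0:ℝ) T, ∀ t ∈ Set.Icc (0:ℝ) T, ∀ i j,
      IntervalIntegrable (fun v => (lyap A N K (Z v) + c v • Z v) i j)
        MeasureTheory.volume s t := by
    intro Z hZ s hs t ht i j
    have hsub : Set.uIcc s t ⊆ Set.Icc 0 T :=
      Set.OrdConnected.uIcc_subset Set.ordConnected_Icc hs ht
    have hZ' := hZ.mono hsub
    have hc : IntervalIntegrable c MeasureTheory.volume s t := by
      refine hcint.mono_set ?_
      rwa [Set.uIcc_of_le hT]
    have hev : Continuous (fun W : Matrix (Fin n) (Fin n) ℝ => W i j) := by fun_prop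
    simp only [Matrix.add_apply, Matrix.smul_apply, smul_eq_mul]
    refine IntervalIntegrable.add ?_ ?_
    · exact ((hev.comp (lyap_continuous A N K)).comp_continuousOn hZ').intervalIntegrable
    · exact hc.mul_continuousOn (hev.comp_continuousOn hZ')
  have hqint : ∀ Z : ℝ → Matrix (Fin n) (Fin n) ℝ, ContinuousOn Z (Set.Icc 0 T) →
      ∀ s ∈ Set.Icc (0:ℝ) T, ∀ t ∈ Set.Icc (0:ℝ) T, ∀ x,
      IntervalIntegrable (fun v => qf (lyap A N K (Z v) + c v • Z v) x)
        MeasureTheory.volume s t := by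
    intro Z hZ s hs t ht x
    simp only [qf_eq_sum]
    refine intInt_sum _ _ _ fun i => intInt_sum _ _ _ fun j => ?_
    exact ((hintg Z hZ s hs t ht i j).mul_const _).const_mul _
  have h0T : (0:ℝ) ∈ Set.Icc (0:ℝ) T := ⟨le_rfl, hT⟩
  have hsym : ∀ t ∈ Set.Icc (0:ℝ) T, (Xbar t - X t).IsSymm := fun t ht =>
    (hXbarsymm t ht).sub (hXsymm t ht)
  have key := core n d T A N K hK c hcnonneg hcint (fun t => Xbar t - X t) hsym
    (hXbc.sub hXc) (by simp [hinit]) ?_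
  · intro t ht
    exact posSemidef_of_qf _ (hsym t ht) (key t ht)
  intro s hs t ht hst x
  have hq : ∀ r ∈ Set.Icc (0:ℝ) T, qf (Xbar r) x = qf (Xbar 0) x +
      ∫ v in (0:ℝ)..r, qf (lyap A N K (Xbar v) + c v • Xbar v) x := by
    intro r hr
    rw [← qf_of_integral _ _ _ (hintg Xbar hXbc 0 h0T r hr), ← qf_add]
    exact congrArg (fun Z => qf Z x) (hXbar r hr)
  have hadj := intervalIntegral.integral_add_adjacent_intervals
    (hqint Xbar hXbc 0 h0T s hs x) (hqint Xbar hXbc s hs t ht x)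
  have h1 : 0 ≤ qf (Matrix.of (fun i j => ∫ v in s..t, (lyap A N K (X v) + c v • X v) i j)
        - (X t - X s)) x := by
    simpa [qf] using (hX s hs t ht hst).dotProduct_mulVec_nonneg x
  rw [qf_sub, qf_sub, qf_of_integral _ _ _ (hintg X hXc s hs t ht)] at h1
  have h2 : ∫ v in s..t, (qf (lyap A N K (Xbar v - X v)) x + c v * qf (Xbar v - X v) x)
      = (∫ v in s..t, qf (lyap A N K (Xbar v) + c v • Xbar v) x)
        - ∫ v in s..t, qf (lyap A N K (X v) + c v • X v) x := by
    rw [← intervalIntegral.integral_sub (hqint Xbar hXbc s hs t ht x) (hqint X hXc s hs t ht x)]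
    congr 1
    funext v
    simp only [lyap_sub, qf_sub, qf_add, qf_smul]
    ring
  refine h2.le.trans ?_
  simp only [qf_sub]
  have h3 := hq s hs
  have h4 := hq t ht
  linarith
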